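/- Let q ≥ 2 be an even integer, λ > 0, and let {f_n^{(i)} : n, i ∈ ℕ} be a bi-indexed family of symmetric functions in L²(ℝ₊^q) such that for all i, j ∈ ℕ: ⟨f_n^{(i)}, f_n^{(j)}⟩ → λ and ‖f_n^{(i)} ⌢_{q/2} f_n^{(j)} − f_n^{(j)}‖ → 0 as n → ∞. Then for every k ≥ 1 and all indices i₁, …, i_{k+1} ∈ ℕ, ⟨f_n^{(i₁)} ⌢_{q/2} f_n^{(i₂)} ⌢_{q/2} ⋯ ⌢_{q/2} f_n^{(i_k)}, f_n^{(i_{k+1})}⟩ → λ as n → ∞ (iterated contraction bracketed from the left). -/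

import Mathlib

open MeasureTheory Filter Topology

noncomputable section

/-- The positive orthant `ℝ₊ⁿ` inside `ℝⁿ`. -/
def posOrthant (n : ℕ) : Set (Fin n → ℝ) := {x | ∀ i, 0 ≤ x i}

/-- Lebesgue measure restricted to the positive orthant; the measure underlying `L²(ℝ₊ⁿ)`. -/
def μpos (n : ℕ) : MeasureTheory.Measure (Fin n → ℝ) :=
  MeasureTheory.volume.restrict (posOrthant n)

/-- Total extension of a finite tuple, giving the junk value `0` out of range. -/
def pad {k : ℕ} (t : Fin k → ℝ) (i : ℕ) : ℝ := if h : i < k then t ⟨i, h⟩ else 0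

/-- The `L²` inner product `⟨f, g⟩ = ∫ f ⬝ conj g` over the positive orthant. -/
def L2inner (n : ℕ) (f g : (Fin n → ℝ) → ℂ) : ℂ :=
  ∫ x, f x * (starRingEnd ℂ) (g x) ∂(μpos n)

/-- The `L²` norm over the positive orthant. -/
def L2norm (n : ℕ) (f : (Fin n → ℝ) → ℂ) : ℝ :=
  Real.sqrt (∫ x, ‖f x‖ ^ 2 ∂(μpos n))

/-- The adjoint `f*(t₁,…,tₙ) = conj (f (tₙ,…,t₁))`. -/
def adjF (n : ℕ) (f : (Fin n → ℝ) → ℂ) : (Fin n → ℝ) → ℂ :=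
  fun t => (starRingEnd ℂ) (f fun i => t i.rev)

/-- `f` is symmetric when `f = f*` a.e. on the positive orthant. -/
def IsSymmFn (n : ℕ) (f : (Fin n → ℝ) → ℂ) : Prop :=
  ∀ᵐ t ∂(μpos n), f t = adjF n f t

/-- Reindexing a multivariate function along an equality of dimensions. -/
def reindex {a b : ℕ} (h : a = b) (F : (Fin a → ℝ) → ℂ) : (Fin b → ℝ) → ℂ :=
  fun t => F fun j => t (Fin.cast h j)

/-- The integrand (in the `s`-variables) of the `p`-th arc contraction
`(f ⌢_p g)(t₁,…,t_{m+n-2p}) = ∫ f(t₁,…,t_{m-p},s_p,…,s₁) g(s₁,…,s_p,t_{m-p+1},…,t_{m+n-2p}) ds`. -/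
def arcKer (m n p : ℕ) (f : (Fin m → ℝ) → ℂ) (g : (Fin n → ℝ) → ℂ)
    (t : Fin (m + n - 2 * p) → ℝ) (s : Fin p → ℝ) : ℂ :=
  f (fun j => if (j : ℕ) < m - p then pad t j else pad s (m - 1 - (j : ℕ))) *
  g (fun j => if (j : ℕ) < p then pad s j else pad t (m + (j : ℕ) - 2 * p))

/-- The `p`-th arc contraction `f ⌢_p g`. -/
def arc (m n p : ℕ) (f : (Fin m → ℝ) → ℂ) (g : (Fin n → ℝ) → ℂ) :
    (Fin (m + n - 2 * p) → ℝ) → ℂ :=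
  fun t => ∫ s in posOrthant p, arcKer m n p f g t s

/-- The integrand of the star contraction of index `(p, p-1)`:
`(f ⋆_p^{p-1} g)(t₁,…,t_{m+n-2p+1})
  = ∫ f(t₁,…,t_{m-p},t_{m-p+1},s_{p-1},…,s₁) g(s₁,…,s_{p-1},t_{m-p+1},…,t_{m+n-2p+1}) ds`. -/
def starKer (m n p : ℕ) (f : (Fin m → ℝ) → ℂ) (g : (Fin n → ℝ) → ℂ)
    (t : Fin (m + n + 1 - 2 * p) → ℝ) (s : Fin (p - 1) → ℝ) : ℂ :=
  f (fun j => if (j : ℕ) < m - p + 1 then pad t j else pad s (m - 1 - (j : ℕ))) *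
  g (fun j => if (j : ℕ) < p - 1 then pad s j else pad t (m + (j : ℕ) + 1 - 2 * p))

/-- The star contraction `f ⋆_p^{p-1} g` of index `(p, p-1)`. -/
def starC (m n p : ℕ) (f : (Fin m → ℝ) → ℂ) (g : (Fin n → ℝ) → ℂ) :
    (Fin (m + n + 1 - 2 * p) → ℝ) → ℂ :=
  fun t => ∫ s in posOrthant (p - 1), starKer m n p f g t s

/-- The `q/2`-th arc contraction of two functions of `q` (even) variables,
expressed again as a function of `q` variables. -/
def contrHalf (q : ℕ) (f g : (Fin q → ℝ) → ℂ) : (Fin q → ℝ) → ℂ :=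
  fun t => ∫ s in posOrthant (q / 2),
    (f fun j => if (j : ℕ) < q - q / 2 then pad t j else pad s (q - 1 - (j : ℕ))) *
    (g fun j => if (j : ℕ) < q / 2 then pad s j else pad t (q + (j : ℕ) - 2 * (q / 2)))

/-- The full contraction `f ⌢_q g = ∫ f(t₁,…,t_q) g(t_q,…,t₁) dt` of two
functions of `q` variables. -/
def fullContr (q : ℕ) (f g : (Fin q → ℝ) → ℂ) : ℂ :=
  ∫ t in posOrthant q, f t * g fun i => t i.rev

/-- A `q`-dimensional square (cube): a product of `q` intervals of equal length. -/
def IsCube (q : ℕ) (S : Set (Fin q → ℝ)) : Prop :=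
  ∃ (a : Fin q → ℝ) (c : ℝ), S = Set.univ.pi fun i => Set.Icc (a i) (a i + c)

/-- One step of the left-bracketed iterated contraction, keeping track of the dimension. -/
def iterStep (q : ℕ) (acc : (d : ℕ) × ((Fin d → ℝ) → ℂ))
    (pr : ℕ × ((Fin q → ℝ) → ℂ)) : (d : ℕ) × ((Fin d → ℝ) → ℂ) :=
  ⟨acc.1 + q - 2 * pr.1, arc acc.1 q pr.1 acc.2 pr.2⟩

/-- The left-bracketed iterated contraction `(⋯((f₀ ⌢_{r₁} f₁) ⌢_{r₂} f₂)⋯) ⌢_{r_k} f_k`. -/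
def iterArc (q : ℕ) (f0 : (Fin q → ℝ) → ℂ) (l : List (ℕ × ((Fin q → ℝ) → ℂ))) :
    (d : ℕ) × ((Fin d → ℝ) → ℂ) :=
  l.foldl (iterStep q) ⟨q, f0⟩

/-- The value of a (`0`-dimensional, i.e. scalar) iterated contraction. -/
def scalarOf (x : (d : ℕ) × ((Fin d → ℝ) → ℂ)) : ℂ := x.2 fun _ => 0

/-!
Split the `q = 2p` variables of each function into two halves. Up to a reversal of variables, the
half contraction then becomes the composition of integral kernels, so Tonelli and Cauchy–Schwarz
bound its `L²` norm by the product of the `L²` norms. Let `T` be an iterated contraction whose last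
factor is `f`. The identity `T ⌢ g - g = (T - f) ⌢ g + (f ⌢ g - g)`, with `‖g‖` bounded along the
limit, shows inductively that an iterated contraction is `L²`-asymptotic to its last factor. It
can therefore be replaced by that factor in the inner product.
-/

section KernelComposition

variable {α β γ E R : Type*} [MeasurableSpace α] [MeasurableSpace β] [MeasurableSpace γ]
  [NormedAddCommGroup E] {μ : Measure α} {ν : Measure β} {ρ : Measure γ}

lemma eLpNorm_two_sq (μ : Measure α) (f : α → E) :
    eLpNorm f 2 μ ^ 2 = ∫⁻ x, ‖f x‖ₑ ^ 2 ∂μ := by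
  simpa using eLpNorm_nnreal_pow_eq_lintegral (μ := μ) (f := f) (two_ne_zero' NNReal)

lemma ae_memLp_prodMk_left [SFinite ν] {F : α × β → E} {p : ENNReal}
    (hp₀ : p ≠ 0) (hp : p ≠ ⊤) (hF : MemLp F p (μ.prod ν)) :
    ∀ᵐ x ∂μ, MemLp (fun s => F (x, s)) p ν := by
  have hmeas : AEMeasurable (fun z => ‖F z‖ₑ ^ p.toReal) (μ.prod ν) := hF.1.enorm.pow_const _
  have hfin : ∫⁻ x, ∫⁻ s, ‖F (x, s)‖ₑ ^ p.toReal ∂ν ∂μ ≠ ⊤ := by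
    rw [← lintegral_prod _ hmeas]
    exact (lintegral_rpow_enorm_lt_top_of_eLpNorm_lt_top hp₀ hp hF.2).ne
  filter_upwards [hF.1.prodMk_left, ae_lt_top' hmeas.lintegral_prod_right' hfin] with x hx hlt
  exact ⟨hx, (eLpNorm_lt_top_iff_lintegral_rpow_enorm_lt_top hp₀ hp).2 hlt⟩

lemma ae_memLp_prodMk_right [SFinite μ] [SFinite ν] {F : α × β → E} {p : ENNReal}
    (hp₀ : p ≠ 0) (hp : p ≠ ⊤) (hF : MemLp F p (μ.prod ν)) :
    ∀ᵐ s ∂ν, MemLp (fun x => F (x, s)) p μ :=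
  ae_memLp_prodMk_left hp₀ hp (hF.comp_measurePreserving Measure.measurePreserving_swap)

variable [NormedRing R] [NormedSpace ℝ R] {F F' : α × β → R} {G : β × γ → R}

lemma enorm_integral_mul_le {p q : ENNReal} [ENNReal.HolderTriple p q 1] {f g : α → R}
    (hf : AEStronglyMeasurable f μ) (hg : AEStronglyMeasurable g μ) :
    ‖∫ x, f x * g x ∂μ‖ₑ ≤ eLpNorm f p μ * eLpNorm g q μ :=
  calc ‖∫ x, f x * g x ∂μ‖ₑ ≤ ∫⁻ x, ‖f x * g x‖ₑ ∂μ := enorm_integral_le_lintegral_enorm _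
    _ = eLpNorm (f • g) 1 μ := eLpNorm_one_eq_lintegral_enorm.symm
    _ ≤ eLpNorm f p μ * eLpNorm g q μ := eLpNorm_smul_le_mul_eLpNorm hg hf

/-- Composition of integral kernels, the continuous analogue of the matrix product: if `F` and `G`
are the kernels of two integral operators, then `kernelComp ν F G` is the kernel of their
composition. -/
def kernelComp (ν : Measure β) (F : α × β → R) (G : β × γ → R) (z : α × γ) : R :=
  ∫ s, F (z.1, s) * G (s, z.2) ∂ν

lemma aestronglyMeasurable_kernelComp [SFinite μ] [SFinite ν] [SFinite ρ]
    (hF : AEStronglyMeasurable F (μ.prod ν)) (hG : AEStronglyMeasurable G (ν.prod ρ)) :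
    AEStronglyMeasurable (kernelComp ν F G) (μ.prod ρ) := by
  have hfst : Measure.QuasiMeasurePreserving (fun z : (α × γ) × β => (z.1.1, z.2))
      ((μ.prod ρ).prod ν) (μ.prod ν) :=
    QuasiMeasurePreserving.prodMap Measure.quasiMeasurePreserving_fst (.id ν)
  have hsnd : Measure.QuasiMeasurePreserving (fun z : (α × γ) × β => (z.2, z.1.2))
      ((μ.prod ρ).prod ν) (ν.prod ρ) :=
    Measure.measurePreserving_swap.quasiMeasurePreserving.comp
      (QuasiMeasurePreserving.prodMap Measure.quasiMeasurePreserving_snd (.id ν))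
  exact ((hF.comp_quasiMeasurePreserving hfst).mul
    (hG.comp_quasiMeasurePreserving hsnd)).integral_prod_right'

lemma eLpNorm_kernelComp_le [SFinite ν] [SFinite ρ]
    (hF : AEStronglyMeasurable F (μ.prod ν)) (hG : AEStronglyMeasurable G (ν.prod ρ)) :
    eLpNorm (kernelComp ν F G) 2 (μ.prod ρ) ≤ eLpNorm F 2 (μ.prod ν) * eLpNorm G 2 (ν.prod ρ) := by
  have hF₂ : AEMeasurable (fun z => ‖F z‖ₑ ^ 2) (μ.prod ν) := hF.enorm.pow_const 2
  have hG₂ : AEMeasurable (fun z => ‖G z‖ₑ ^ 2) (ν.prod ρ) := hG.enorm.pow_const 2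
  have cauchy_schwarz : ∀ᵐ z ∂μ.prod ρ, ‖kernelComp ν F G z‖ₑ ^ 2 ≤
      (∫⁻ s, ‖F (z.1, s)‖ₑ ^ 2 ∂ν) * ∫⁻ s, ‖G (s, z.2)‖ₑ ^ 2 ∂ν := by
    filter_upwards [Measure.quasiMeasurePreserving_fst.ae hF.prodMk_left,
      Measure.quasiMeasurePreserving_snd.ae hG.prodMk_right] with z hFz hGz
    rw [← eLpNorm_two_sq, ← eLpNorm_two_sq, ← mul_pow]
    gcongr
    exact enorm_integral_mul_le hFz hGz
  rw [← ENNReal.pow_le_pow_left_iff two_ne_zero]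
  calc eLpNorm (kernelComp ν F G) 2 (μ.prod ρ) ^ 2
      = ∫⁻ z, ‖kernelComp ν F G z‖ₑ ^ 2 ∂μ.prod ρ := eLpNorm_two_sq _ _
    _ ≤ ∫⁻ z, (∫⁻ s, ‖F (z.1, s)‖ₑ ^ 2 ∂ν) * ∫⁻ s, ‖G (s, z.2)‖ₑ ^ 2 ∂ν ∂μ.prod ρ :=
        lintegral_mono_ae cauchy_schwarz
    _ = (∫⁻ x, ∫⁻ s, ‖F (x, s)‖ₑ ^ 2 ∂ν ∂μ) * ∫⁻ y, ∫⁻ s, ‖G (s, y)‖ₑ ^ 2 ∂ν ∂ρ :=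
        lintegral_prod_mul hF₂.lintegral_prod_right' hG₂.lintegral_prod_left'
    _ = (eLpNorm F 2 (μ.prod ν) * eLpNorm G 2 (ν.prod ρ)) ^ 2 := by
        rw [mul_pow, eLpNorm_two_sq, eLpNorm_two_sq, lintegral_prod _ hF₂,
          lintegral_prod_symm _ hG₂]

lemma kernelComp_sub_left [SFinite ν] [SFinite ρ] {p q : ENNReal}
    [ENNReal.HolderTriple p q 1] (hp₀ : p ≠ 0) (hp : p ≠ ⊤) (hq₀ : q ≠ 0) (hq : q ≠ ⊤)
    (hF : MemLp F p (μ.prod ν)) (hF' : MemLp F' p (μ.prod ν)) (hG : MemLp G q (ν.prod ρ)) :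
    kernelComp ν (F - F') G =ᵐ[μ.prod ρ] kernelComp ν F G - kernelComp ν F' G := by
  filter_upwards [Measure.quasiMeasurePreserving_fst.ae (ae_memLp_prodMk_left hp₀ hp hF),
    Measure.quasiMeasurePreserving_fst.ae (ae_memLp_prodMk_left hp₀ hp hF'),
    Measure.quasiMeasurePreserving_snd.ae (ae_memLp_prodMk_right hq₀ hq hG)] with z hFz hFz' hGz
  simp only [kernelComp, Pi.sub_apply, sub_mul]
  exact integral_sub (hFz.integrable_mul hGz) (hFz'.integrable_mul hGz)

end KernelComposition

section TupleMeasures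

variable {X : Type*} [MeasurableSpace X]

/-- `Fin.append` as a measurable equivalence: it identifies functions of `m + n` variables with
kernels on pairs of tuples. -/
def finAppendMeasurableEquiv (X : Type*) [MeasurableSpace X] (m n : ℕ) :
    (Fin m → X) × (Fin n → X) ≃ᵐ (Fin (m + n) → X) where
  toEquiv := Fin.appendEquiv m n
  measurable_toFun := by
    refine measurable_pi_iff.2 fun j => ?_
    cases j using Fin.addCases with
    | left i => simpa using! (measurable_pi_apply i).comp measurable_fst
    | right i => simpa using! (measurable_pi_apply i).comp measurable_snd
  measurable_invFun := by
    simp only [Fin.appendEquiv, Equiv.coe_fn_symm_mk]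
    fun_prop

lemma measurePreserving_finAppendMeasurableEquiv {m n : ℕ} (μ : Fin (m + n) → Measure X)
    [∀ i, SigmaFinite (μ i)] :
    MeasurePreserving (finAppendMeasurableEquiv X m n)
      ((Measure.pi fun i => μ (Fin.castAdd n i)).prod (Measure.pi fun i => μ (Fin.natAdd m i)))
      (Measure.pi μ) where
  measurable := (finAppendMeasurableEquiv X m n).measurable
  map_eq := by
    refine (Measure.pi_eq fun s _ => ?_).symm
    have preimage_pi : finAppendMeasurableEquiv X m n ⁻¹' Set.univ.pi s =
        (Set.univ.pi fun i => s (Fin.castAdd n i)) ×ˢ Set.univ.pi fun i => s (Fin.natAdd m i) := by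
      ext z
      simp [finAppendMeasurableEquiv, Fin.forall_fin_add]
    rw [MeasurableEquiv.map_apply, preimage_pi, Measure.prod_prod, Measure.pi_pi, Measure.pi_pi,
      Fin.prod_univ_add]

lemma measurePreserving_pi_comp_equiv {ι ι' : Type*} [Fintype ι] [Fintype ι'] (e : ι ≃ ι')
    (μ : ι' → Measure X) [∀ i, SigmaFinite (μ i)] :
    MeasurePreserving (fun t : ι' → X => t ∘ e) (Measure.pi μ) (Measure.pi fun i => μ (e i)) :=
  (measurePreserving_piCongrLeft μ e).symm

end TupleMeasures

section PositiveOrthant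

lemma μpos_eq_pi (n : ℕ) : μpos n = Measure.pi fun _ => volume.restrict (Set.Ici 0) := by
  have hpi : posOrthant n = Set.univ.pi fun _ => Set.Ici 0 := by
    ext x
    simp [posOrthant, Pi.le_def]
  rw [μpos, hpi, volume_pi, Measure.restrict_pi_pi]

instance (n : ℕ) : SigmaFinite (μpos n) := by
  rw [μpos_eq_pi]
  infer_instance

lemma measurePreserving_append_μpos (m n : ℕ) :
    MeasurePreserving (finAppendMeasurableEquiv ℝ m n) ((μpos m).prod (μpos n)) (μpos (m + n)) := by
  simp only [μpos_eq_pi]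
  exact measurePreserving_finAppendMeasurableEquiv fun _ => volume.restrict (Set.Ici 0)

lemma measurePreserving_append_rev_μpos (m n : ℕ) :
    MeasurePreserving (fun z : (Fin m → ℝ) × (Fin n → ℝ) => Fin.append z.1 (z.2 ∘ Fin.rev))
      ((μpos m).prod (μpos n)) (μpos (m + n)) := by
  have hrev : MeasurePreserving (fun t : Fin n → ℝ => t ∘ Fin.rev) (μpos n) (μpos n) := by
    simp only [μpos_eq_pi]
    exact measurePreserving_pi_comp_equiv Fin.revPerm _
  exact (measurePreserving_append_μpos m n).comp ((MeasurePreserving.id _).prod hrev)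

end PositiveOrthant

section HalfContraction

lemma pad_val {k : ℕ} (t : Fin k → ℝ) (i : Fin k) : pad t i = t i := by
  simp [pad]

/- The first factor reads the integrated variables in reverse order, so its kernel carries a
`Fin.rev` in the second half. -/
lemma contrHalf_comp_finAppendMeasurableEquiv (p : ℕ) (f g : (Fin (p + p) → ℝ) → ℂ) :
    contrHalf (p + p) f g ∘ finAppendMeasurableEquiv ℝ p p =
      kernelComp (μpos p) (fun z => f (Fin.append z.1 (z.2 ∘ Fin.rev)))
        (g ∘ finAppendMeasurableEquiv ℝ p p) := by
  have half : (p + p) / 2 = p := by omega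
  ext ⟨x, y⟩
  rw [Function.comp_apply, contrHalf, half]
  refine integral_congr_ae (.of_forall fun s => ?_)
  change f _ * g _ = f (Fin.append x (s ∘ Fin.rev)) * g (Fin.append s y)
  congr 2
  · refine funext (Fin.addCases (fun i => ?_) fun i => ?_)
    · simpa using! pad_val (Fin.append x y) (Fin.castAdd p i)
    · have index : p + p - 1 - (p + (i : ℕ)) = i.rev := by
        rw [Fin.val_rev]
        omega
      simpa [-Fin.natAdd_eq_addNat, index] using! pad_val s i.rev
  · refine funext (Fin.addCases (fun i => ?_) fun i => ?_)
    · simpa using! pad_val s i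
    · have index : p + p + (p + (i : ℕ)) - 2 * p = Fin.natAdd p i := by
        rw [Fin.val_natAdd]
        omega
      simpa [-Fin.natAdd_eq_addNat, index] using! pad_val (Fin.append x y) (Fin.natAdd p i)

variable {q : ℕ} {f f' g : (Fin q → ℝ) → ℂ}

lemma aestronglyMeasurable_contrHalf (hq : Even q) (hf : AEStronglyMeasurable f (μpos q))
    (hg : AEStronglyMeasurable g (μpos q)) : AEStronglyMeasurable (contrHalf q f g) (μpos q) := by
  obtain ⟨p, rfl⟩ := hq
  have happend := measurePreserving_append_μpos p p
  rw [← happend.aestronglyMeasurable_comp_iff (MeasurableEquiv.measurableEmbedding _),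
    contrHalf_comp_finAppendMeasurableEquiv]
  exact aestronglyMeasurable_kernelComp
    (hf.comp_measurePreserving (measurePreserving_append_rev_μpos p p))
    (hg.comp_measurePreserving happend)

lemma eLpNorm_contrHalf_le (hq : Even q) (hf : AEStronglyMeasurable f (μpos q))
    (hg : AEStronglyMeasurable g (μpos q)) :
    eLpNorm (contrHalf q f g) 2 (μpos q) ≤ eLpNorm f 2 (μpos q) * eLpNorm g 2 (μpos q) := by
  have hfg := aestronglyMeasurable_contrHalf hq hf hg
  obtain ⟨p, rfl⟩ := hq
  have happend := measurePreserving_append_μpos p p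
  have hfold := measurePreserving_append_rev_μpos p p
  rw [← eLpNorm_comp_measurePreserving hfg happend, ← eLpNorm_comp_measurePreserving hf hfold,
    ← eLpNorm_comp_measurePreserving hg happend, contrHalf_comp_finAppendMeasurableEquiv]
  exact eLpNorm_kernelComp_le (hf.comp_measurePreserving hfold) (hg.comp_measurePreserving happend)

lemma memLp_contrHalf (hq : Even q) (hf : MemLp f 2 (μpos q)) (hg : MemLp g 2 (μpos q)) :
    MemLp (contrHalf q f g) 2 (μpos q) :=
  ⟨aestronglyMeasurable_contrHalf hq hf.1 hg.1,
    (eLpNorm_contrHalf_le hq hf.1 hg.1).trans_lt (ENNReal.mul_lt_top hf.2 hg.2)⟩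

lemma contrHalf_sub_left (hq : Even q) (hf : MemLp f 2 (μpos q)) (hf' : MemLp f' 2 (μpos q))
    (hg : MemLp g 2 (μpos q)) :
    contrHalf q (f - f') g =ᵐ[μpos q] contrHalf q f g - contrHalf q f' g := by
  obtain ⟨p, rfl⟩ := hq
  have happend := measurePreserving_append_μpos p p
  have hfold := measurePreserving_append_rev_μpos p p
  have hkernel := kernelComp_sub_left two_ne_zero ENNReal.ofNat_ne_top two_ne_zero
    ENNReal.ofNat_ne_top (hf.comp_measurePreserving hfold) (hf'.comp_measurePreserving hfold)
    (hg.comp_measurePreserving happend)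
  rw [EventuallyEq, ← happend.map_eq, (MeasurableEquiv.measurableEmbedding _).ae_map_iff]
  filter_upwards [hkernel] with z hz
  have hsplit (u) := congrFun (contrHalf_comp_finAppendMeasurableEquiv p u g) z
  simp only [Function.comp_apply] at hsplit
  rw [Pi.sub_apply, hsplit, hsplit, hsplit]
  exact hz

end HalfContraction

section L2

variable {n : ℕ} {f f' g : (Fin n → ℝ) → ℂ}

lemma L2norm_eq_lpNorm (hf : AEStronglyMeasurable f (μpos n)) :
    L2norm n f = lpNorm f 2 (μpos n) := by
  simp [L2norm, lpNorm_eq_integral_norm_rpow_toReal two_ne_zero ENNReal.ofNat_ne_top hf,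
    Real.sqrt_eq_rpow]

lemma L2norm_eq_sqrt_L2inner_self (f : (Fin n → ℝ) → ℂ) :
    L2norm n f = √(L2inner n f f).re := by
  simp only [L2norm, L2inner, Complex.mul_conj', ← Complex.ofReal_pow]
  rw [integral_complex_ofReal, Complex.ofReal_re]

lemma norm_L2inner_le (hf : MemLp f 2 (μpos n)) (hg : MemLp g 2 (μpos n)) :
    ‖L2inner n f g‖ ≤ L2norm n f * L2norm n g := by
  have eLpNorm_star : eLpNorm (star g) 2 (μpos n) = eLpNorm g 2 (μpos n) :=
    eLpNorm_congr_norm_ae (.of_forall fun x => norm_star (g x))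
  rw [L2norm_eq_lpNorm hf.1, L2norm_eq_lpNorm hg.1, ← toReal_eLpNorm hf.1, ← toReal_eLpNorm hg.1,
    ← ENNReal.toReal_mul, ← toReal_enorm, ← eLpNorm_star]
  exact ENNReal.toReal_mono (ENNReal.mul_ne_top hf.2.ne hg.star.2.ne)
    (enorm_integral_mul_le hf.1 hg.star.1)

lemma L2inner_sub_left (hf : MemLp f 2 (μpos n)) (hf' : MemLp f' 2 (μpos n))
    (hg : MemLp g 2 (μpos n)) :
    L2inner n (f - f') g = L2inner n f g - L2inner n f' g := by
  simp only [L2inner, Pi.sub_apply, sub_mul]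
  exact integral_sub (hf.integrable_mul hg.star) (hf'.integrable_mul hg.star)

lemma L2norm_add_le (hf : MemLp f 2 (μpos n)) (hg : MemLp g 2 (μpos n)) :
    L2norm n (f + g) ≤ L2norm n f + L2norm n g := by
  rw [L2norm_eq_lpNorm hf.1, L2norm_eq_lpNorm hg.1, L2norm_eq_lpNorm (hf.add hg).1]
  exact lpNorm_add_le hf one_le_two

lemma L2norm_congr_ae (hfg : f =ᵐ[μpos n] g) : L2norm n f = L2norm n g := by
  rw [L2norm, L2norm]
  congr 1
  exact integral_congr_ae (hfg.fun_comp fun z => ‖z‖ ^ 2)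

lemma L2norm_contrHalf_le (hn : Even n) (hf : MemLp f 2 (μpos n)) (hg : MemLp g 2 (μpos n)) :
    L2norm n (contrHalf n f g) ≤ L2norm n f * L2norm n g := by
  have hfg := memLp_contrHalf hn hf hg
  rw [L2norm_eq_lpNorm hfg.1, L2norm_eq_lpNorm hf.1, L2norm_eq_lpNorm hg.1,
    ← toReal_eLpNorm hfg.1, ← toReal_eLpNorm hf.1, ← toReal_eLpNorm hg.1, ← ENNReal.toReal_mul]
  exact ENNReal.toReal_mono (ENNReal.mul_ne_top hf.2.ne hg.2.ne)
    (eLpNorm_contrHalf_le hn hf.1 hg.1)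

lemma L2norm_contrHalf_sub_le (hn : Even n) {h : (Fin n → ℝ) → ℂ} (hf : MemLp f 2 (μpos n))
    (hf' : MemLp f' 2 (μpos n)) (hg : MemLp g 2 (μpos n)) (hh : MemLp h 2 (μpos n)) :
    L2norm n (contrHalf n f g - h) ≤
      L2norm n (f - f') * L2norm n g + L2norm n (contrHalf n f' g - h) := by
  have telescope : contrHalf n f g - h =ᵐ[μpos n]
      contrHalf n (f - f') g + (contrHalf n f' g - h) := by
    filter_upwards [contrHalf_sub_left hn hf hf' hg] with t ht
    simp [ht]
  calc L2norm n (contrHalf n f g - h)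
      = L2norm n (contrHalf n (f - f') g + (contrHalf n f' g - h)) := L2norm_congr_ae telescope
    _ ≤ L2norm n (contrHalf n (f - f') g) + L2norm n (contrHalf n f' g - h) :=
        L2norm_add_le (memLp_contrHalf hn (hf.sub hf') hg) ((memLp_contrHalf hn hf' hg).sub hh)
    _ ≤ L2norm n (f - f') * L2norm n g + L2norm n (contrHalf n f' g - h) := by
        gcongr
        exact L2norm_contrHalf_le hn (hf.sub hf') hg

end L2

section IteratedContraction

variable {q : ℕ} {α ι : Type*} {l : Filter α}

lemma memLp_foldl_contrHalf (hq : Even q) {f : (Fin q → ℝ) → ℂ} (hf : MemLp f 2 (μpos q))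
    {L : List ((Fin q → ℝ) → ℂ)} (hL : ∀ g ∈ L, MemLp g 2 (μpos q)) :
    MemLp (L.foldl (contrHalf q) f) 2 (μpos q) :=
  L.foldlRecOn (motive := (MemLp · 2 (μpos q))) (contrHalf q) hf
    fun _ hf' g hg => memLp_contrHalf hq hf' (hL g hg)

variable {f : α → ι → (Fin q → ℝ) → ℂ}

lemma tendsto_L2norm_foldl_contrHalf_sub (hq : Even q) (hmem : ∀ a i, MemLp (f a i) 2 (μpos q))
    {r : ι → ℝ} (hnorm : ∀ i, Tendsto (fun a => L2norm q (f a i)) l (𝓝 (r i)))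
    (hcontr : ∀ i j, Tendsto (fun a => L2norm q (contrHalf q (f a i) (f a j) - f a j)) l (𝓝 0))
    (i : ι) (L : List ι) :
    Tendsto (fun a => L2norm q ((L.map (f a)).foldl (contrHalf q) (f a i) - f a (L.getLastD i)))
      l (𝓝 0) := by
  induction L using List.reverseRecOn with
  | nil => simp [L2norm, tendsto_const_nhds]
  | append_singleton L j ih =>
    simp only [List.map_append, List.map_cons, List.map_nil, List.foldl_append, List.foldl_cons,
      List.foldl_nil, List.getLastD_concat]
    refine squeeze_zero (fun a => Real.sqrt_nonneg _) (fun a => ?_)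
      (by simpa using (ih.mul (hnorm j)).add (hcontr (L.getLastD i) j))
    refine L2norm_contrHalf_sub_le hq (memLp_foldl_contrHalf hq (hmem a i) ?_)
      (hmem a _) (hmem a j) (hmem a j)
    simp [hmem]

theorem iterated_half_contraction_inner_limit_lambda_general (hq : Even q)
    (hmem : ∀ a i, MemLp (f a i) 2 (μpos q)) {c : ι → ι → ℂ}
    (hinner : ∀ i j, Tendsto (fun a => L2inner q (f a i) (f a j)) l (𝓝 (c i j)))
    (hcontr : ∀ i j, Tendsto (fun a => L2norm q (contrHalf q (f a i) (f a j) - f a j)) l (𝓝 0))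
    (i j : ι) (L : List ι) :
    Tendsto (fun a => L2inner q ((L.map (f a)).foldl (contrHalf q) (f a i)) (f a j)) l
      (𝓝 (c (L.getLastD i) j)) := by
  have hnorm (i : ι) : Tendsto (fun a => L2norm q (f a i)) l (𝓝 √(c i i).re) := by
    simp_rw [L2norm_eq_sqrt_L2inner_self]
    exact ((Complex.continuous_re.tendsto _).comp (hinner i i)).sqrt
  have hT (a : α) : MemLp ((L.map (f a)).foldl (contrHalf q) (f a i)) 2 (μpos q) :=
    memLp_foldl_contrHalf hq (hmem a i) (by simp [hmem])
  have hdiff : Tendsto (fun a => L2inner q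
      ((L.map (f a)).foldl (contrHalf q) (f a i) - f a (L.getLastD i)) (f a j)) l (𝓝 0) :=
    squeeze_zero_norm (fun a => norm_L2inner_le ((hT a).sub (hmem a _)) (hmem a j)) (by
      simpa using (tendsto_L2norm_foldl_contrHalf_sub hq hmem hnorm hcontr i L).mul (hnorm j))
  simpa [L2inner_sub_left, hT, hmem] using hdiff.add (hinner (L.getLastD i) j)

end IteratedContraction

/-- when all inner products tend to the same `λ > 0` and all
`‖f_n^{(i)} ⌢_{q/2} f_n^{(j)} - f_n^{(j)}‖ → 0`, every iterated `q/2`-contraction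
paired with one more function converges to `λ`. -/
theorem iterated_half_contraction_inner_limit_lambda (q : ℕ) (hq2 : 2 ≤ q) (hqe : q % 2 = 0)
    (lam : ℝ) (hlam : 0 < lam)
    (f : ℕ → ℕ → (Fin q → ℝ) → ℂ)
    (hmem : ∀ n i, MeasureTheory.MemLp (f n i) 2 (μpos q))
    (hsym : ∀ n i, IsSymmFn q (f n i))
    (hinner : ∀ i j, Filter.Tendsto (fun n => L2inner q (f n i) (f n j)) Filter.atTop
      (nhds (lam : ℂ)))
    (hcontr : ∀ i j, Filter.Tendsto
      (fun n => L2norm q (fun t => contrHalf q (f n i) (f n j) t - f n j t))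
      Filter.atTop (nhds 0))
    (k : ℕ) (hk : 1 ≤ k) (idx : ℕ → ℕ) :
    Filter.Tendsto (fun n => L2inner q
        (((List.range (k - 1)).map fun j => f n (idx (j + 2))).foldl
          (contrHalf q) (f n (idx 1)))
        (f n (idx (k + 1))))
      Filter.atTop (nhds (lam : ℂ)) := by
  simpa [Function.comp_def] using iterated_half_contraction_inner_limit_lambda_general
    (Nat.even_iff.2 hqe) hmem hinner hcontr (idx 1) (idx (k + 1))
    ((List.range (k - 1)).map fun j => idx (j + 2))

end
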